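/- Let T > 0, let F : [0,T]×[0,T] → ℝ be continuous such that F₁(r,s) = ∂F(r,s)/∂r exists and is continuous on the triangle {(r,s) : 0 ≤ s ≤ r ≤ T}, let Θ be continuous on the triangle {(s,t) : 0 ≤ t ≤ s ≤ T}, and let ζ : [0,T] → ℝ be continuous with ζ(t) ≠ 0 for all t, such that for all 0 ≤ t ≤ r ≤ T one has Θ(r,t)·F(r,r) + ∫_t^r Θ(s,t)·F₁(r,s) ds = ζ(r). Then for every continuous h : [0,T] → ℝ, the function t ↦ ∫_t^T Θ(s,t)·(K_F^* h)(s) ds is differentiable at every t ∈ [0,T] with derivative −ζ(t)·h(t); consequently h(t) = −(1/ζ(t)) · (d/dt) ∫_t^T Θ(s,t)·(K_F^* h)(s) ds for all t, i.e. (K_F^*)^{-1}(K_F^* h) = h. -/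

import Mathlib

open MeasureTheory Set

/-!
Exchanging the order of integration over the triangle `u ≤ s ≤ r ≤ T` turns
`∫_u^T Θ(s,u) (K_F^* h)(s) ds` into `∫_u^T (Θ(r,u) F(r,r) + ∫_u^r Θ(s,u) F₁(r,s) ds) h(r) dr`.
The bracket is `ζ(r)`, whatever `u` is, so the fundamental theorem of calculus gives the
derivative `-ζ h`.
-/

/-- The triangle `a ≤ s ≤ r ≤ b` on which Volterra kernels live. A point is written `(r, s)`, in the
order of the arguments of a kernel `F r s`. -/
def volterraTriangle (a b : ℝ) : Set (ℝ × ℝ) :=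
  {p | a ≤ p.2 ∧ p.2 ≤ p.1 ∧ p.1 ≤ b}

section Triangle

variable {a b : ℝ}

theorem volterraTriangle_subset_prod : volterraTriangle a b ⊆ Icc a b ×ˢ Icc a b :=
  fun _ ⟨has, hsr, hrb⟩ => ⟨⟨has.trans hsr, hrb⟩, ⟨has, hsr.trans hrb⟩⟩

theorem isClosed_volterraTriangle : IsClosed (volterraTriangle a b) :=
  (isClosed_le continuous_const continuous_snd).inter
    ((isClosed_le continuous_snd continuous_fst).inter
      (isClosed_le continuous_fst continuous_const))

theorem isCompact_volterraTriangle : IsCompact (volterraTriangle a b) :=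
  (isCompact_Icc.prod isCompact_Icc).of_isClosed_subset isClosed_volterraTriangle
    volterraTriangle_subset_prod

variable {E : Type*} [NormedAddCommGroup E] [NormedSpace ℝ E] {μ ν : Measure ℝ}

theorem integral_indicator_volterraTriangle_fst [NullSingletonClass μ] (g : ℝ × ℝ → E) (s : ℝ) :
    ∫ r, (volterraTriangle a b).indicator g (r, s) ∂μ =
      (Icc a b).indicator (fun s => ∫ r in s..b, g (r, s) ∂μ) s := by
  by_cases hs : s ∈ Icc a b
  · have hsection : (fun r => (r, s)) ⁻¹' volterraTriangle a b = Icc s b :=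
      Set.ext fun r => ⟨fun hr => hr.2, fun hr => ⟨hs.1, hr⟩⟩
    rw [indicator_of_mem hs, intervalIntegral.integral_of_le hs.2, ← integral_Icc_eq_integral_Ioc,
      ← integral_indicator measurableSet_Icc, ← hsection]
    rfl
  · rw [indicator_of_notMem hs]
    exact integral_eq_zero_of_ae <| .of_forall fun r =>
      indicator_of_notMem (fun hr => hs (volterraTriangle_subset_prod hr).2) g

theorem integral_indicator_volterraTriangle_snd [NullSingletonClass ν] (g : ℝ × ℝ → E) (r : ℝ) :
    ∫ s, (volterraTriangle a b).indicator g (r, s) ∂ν =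
      (Icc a b).indicator (fun r => ∫ s in a..r, g (r, s) ∂ν) r := by
  by_cases hr : r ∈ Icc a b
  · have hsection : (fun s => (r, s)) ⁻¹' volterraTriangle a b = Icc a r :=
      Set.ext fun s => ⟨fun hs => ⟨hs.1, hs.2.1⟩, fun hs => ⟨hs.1, hs.2, hr.2⟩⟩
    rw [indicator_of_mem hr, intervalIntegral.integral_of_le hr.1, ← integral_Icc_eq_integral_Ioc,
      ← integral_indicator measurableSet_Icc, ← hsection]
    rfl
  · rw [indicator_of_notMem hr]
    exact integral_eq_zero_of_ae <| .of_forall fun s =>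
      indicator_of_notMem (fun hs => hr (volterraTriangle_subset_prod hs).1) g

theorem integrableOn_volterraTriangle_smul [SFinite μ] [IsLocallyFiniteMeasure ν]
    {k : ℝ × ℝ → ℝ} {h : ℝ → E} (hk : ContinuousOn k (volterraTriangle a b))
    (hh : IntegrableOn h (Icc a b) μ) :
    IntegrableOn (fun p => k p • h p.1) (volterraTriangle a b) (μ.prod ν) := by
  have : Fact (ν (Icc a b) < ⊤) := ⟨isCompact_Icc.measure_lt_top⟩
  have hfst : IntegrableOn (fun p : ℝ × ℝ => h p.1) (Icc a b ×ˢ Icc a b) (μ.prod ν) := by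
    rw [IntegrableOn, ← Measure.prod_restrict]
    exact Integrable.comp_fst hh _
  exact (hfst.mono_set volterraTriangle_subset_prod).continuousOn_smul hk
    isCompact_volterraTriangle

variable [SFinite ν] {g : ℝ × ℝ → E}

theorem integrableOn_integral_fst_of_volterraTriangle [SFinite μ] [NullSingletonClass μ]
    (hg : IntegrableOn g (volterraTriangle a b) (μ.prod ν)) :
    IntegrableOn (fun s => ∫ r in s..b, g (r, s) ∂μ) (Icc a b) ν := by
  have := (hg.integrable_indicator isClosed_volterraTriangle.measurableSet).integral_prod_right
  simpa only [integral_indicator_volterraTriangle_fst,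
    integrable_indicator_iff measurableSet_Icc] using this

theorem integrableOn_integral_snd_of_volterraTriangle [NullSingletonClass ν]
    (hg : IntegrableOn g (volterraTriangle a b) (μ.prod ν)) :
    IntegrableOn (fun r => ∫ s in a..r, g (r, s) ∂ν) (Icc a b) μ := by
  have := (hg.integrable_indicator isClosed_volterraTriangle.measurableSet).integral_prod_left
  simpa only [integral_indicator_volterraTriangle_snd,
    integrable_indicator_iff measurableSet_Icc] using this

theorem integral_volterraTriangle_swap [SFinite μ] [NullSingletonClass μ] [NullSingletonClass ν]
    (hab : a ≤ b) (hg : IntegrableOn g (volterraTriangle a b) (μ.prod ν)) :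
    ∫ s in a..b, ∫ r in s..b, g (r, s) ∂μ ∂ν = ∫ r in a..b, ∫ s in a..r, g (r, s) ∂ν ∂μ := by
  have hswap := integral_integral_swap (f := fun r s => (volterraTriangle a b).indicator g (r, s))
    (hg.integrable_indicator isClosed_volterraTriangle.measurableSet)
  simp only [integral_indicator_volterraTriangle_fst, integral_indicator_volterraTriangle_snd,
    integral_indicator measurableSet_Icc, integral_Icc_eq_integral_Ioc] at hswap
  simpa only [intervalIntegral.integral_of_le hab] using hswap.symm

end Triangle

section VolterraAdjoint

variable {E : Type*} [NormedAddCommGroup E] [NormedSpace ℝ E]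

/-- The adjoint `K_F^*` on `[0, T]` of the Volterra operator with kernel `F`; the argument `F₁`
stands for `∂F(r,s)/∂r`. -/
noncomputable def volterraAdjoint (F F₁ : ℝ → ℝ → ℝ) (T : ℝ) (h : ℝ → E) (s : ℝ) : E :=
  F s s • h s + ∫ r in s..T, F₁ r s • h r

theorem integral_smul_volterraAdjoint [CompleteSpace E] {u T : ℝ} (huT : u ≤ T)
    {F F₁ : ℝ → ℝ → ℝ} {θ ζ : ℝ → ℝ} {h : ℝ → E}
    (hF₁ : ContinuousOn (fun p : ℝ × ℝ => F₁ p.1 p.2) (volterraTriangle u T))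
    (hθ : ContinuousOn θ (Icc u T)) (hh : IntegrableOn h (Icc u T))
    (hζh : IntegrableOn (fun r => ζ r • h r) (Icc u T))
    (hζ : ∀ r ∈ Icc u T, θ r * F r r + (∫ s in u..r, θ s * F₁ r s) = ζ r) :
    ∫ s in u..T, θ s • volterraAdjoint F F₁ T h s = ∫ r in u..T, ζ r • h r := by
  have hk : ContinuousOn (fun p : ℝ × ℝ => θ p.2 * F₁ p.1 p.2) (volterraTriangle u T) :=
    (hθ.comp continuousOn_snd fun _ hp => (volterraTriangle_subset_prod hp).2).mul hF₁
  have hg : IntegrableOn (fun p : ℝ × ℝ => (θ p.2 * F₁ p.1 p.2) • h p.1) (volterraTriangle u T)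
      (volume.prod volume) := integrableOn_volterraTriangle_smul hk hh
  have hfst := integrableOn_integral_fst_of_volterraTriangle hg
  have hsnd := integrableOn_integral_snd_of_volterraTriangle hg
  have hsplit : ∀ r ∈ Icc u T,
      (θ r * F r r) • h r + ∫ s in u..r, (θ s * F₁ r s) • h r = ζ r • h r := fun r hr => by
    rw [intervalIntegral.integral_smul_const, ← add_smul, hζ r hr]
  -- By `hsplit`, the diagonal term is a difference of integrable functions.
  have hdiag : IntervalIntegrable (fun r => (θ r * F r r) • h r) volume u T :=
    (intervalIntegrable_iff_integrableOn_Icc_of_le huT).2 <|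
      (hζh.sub hsnd).congr_fun (fun r hr => sub_eq_of_eq_add (hsplit r hr).symm) measurableSet_Icc
  calc ∫ s in u..T, θ s • volterraAdjoint F F₁ T h s
      = ∫ s in u..T, ((θ s * F s s) • h s + ∫ r in s..T, (θ s * F₁ r s) • h r) := by
        simp only [volterraAdjoint, smul_add, mul_smul, intervalIntegral.integral_smul]
    _ = ∫ r in u..T, ((θ r * F r r) • h r + ∫ s in u..r, (θ s * F₁ r s) • h r) := by
        rw [intervalIntegral.integral_add hdiag
            ((intervalIntegrable_iff_integrableOn_Icc_of_le huT).2 hfst),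
          intervalIntegral.integral_add hdiag
            ((intervalIntegrable_iff_integrableOn_Icc_of_le huT).2 hsnd),
          integral_volterraTriangle_swap huT hg]
    _ = ∫ r in u..T, ζ r • h r :=
        intervalIntegral.integral_congr fun r hr => hsplit r (uIcc_of_le huT ▸ hr)

theorem hasDerivWithinAt_integral_left_Icc [CompleteSpace E] {a b t : ℝ} {f : ℝ → E}
    (hf : IntegrableOn f (Icc a b)) (ht : t ∈ Icc a b) (hft : ContinuousWithinAt f (Icc a b) t) :
    HasDerivWithinAt (fun u => ∫ x in u..b, f x) (-f t) (Icc a b) t := by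
  have : Fact (t ∈ Icc a b) := ⟨ht⟩
  have hint : IntervalIntegrable f volume t b :=
    (intervalIntegrable_iff_integrableOn_Icc_of_le ht.2).2 (hf.mono_set (Icc_subset_Icc_left ht.1))
  exact intervalIntegral.integral_hasDerivWithinAt_left hint
    ⟨Icc a b, self_mem_nhdsWithin, hf.aestronglyMeasurable⟩ hft

theorem KFstar_inverse_via_derivative_general [CompleteSpace E]
    {T : ℝ} (hT : 0 < T) {F F₁ Θ : ℝ → ℝ → ℝ} {ζ : ℝ → ℝ}
    (_hderiv : ∀ s r : ℝ, 0 ≤ s → s ≤ r → r ≤ T →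
      HasDerivWithinAt (fun u => F u s) (F₁ r s) (Icc s T) r)
    (hF₁ : ContinuousOn (fun p : ℝ × ℝ => F₁ p.1 p.2) (volterraTriangle 0 T))
    (hΘ : ContinuousOn (fun p : ℝ × ℝ => Θ p.1 p.2) (volterraTriangle 0 T))
    (hζcont : ContinuousOn ζ (Icc 0 T))
    (hζ : ∀ t r : ℝ, 0 ≤ t → t ≤ r → r ≤ T →
      Θ r t * F r r + (∫ s in t..r, Θ s t * F₁ r s) = ζ r)
    {h : ℝ → E} (hh : IntegrableOn h (Icc 0 T)) {t : ℝ} (ht : t ∈ Icc 0 T)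
    (hζt : ζ t ≠ 0) (hht : ContinuousWithinAt h (Icc 0 T) t) :
    HasDerivWithinAt (fun u => ∫ s in u..T, Θ s u • volterraAdjoint F F₁ T h s)
        (-(ζ t • h t)) (Icc 0 T) t ∧
      h t = -(1 / ζ t) •
        derivWithin (fun u => ∫ s in u..T, Θ s u • volterraAdjoint F F₁ T h s) (Icc 0 T) t := by
  have hζh : IntegrableOn (fun r => ζ r • h r) (Icc 0 T) :=
    hh.continuousOn_smul hζcont isCompact_Icc
  have hadjoint : ∀ u ∈ Icc 0 T,
      ∫ s in u..T, Θ s u • volterraAdjoint F F₁ T h s = ∫ r in u..T, ζ r • h r := fun u hu => by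
    have hsub : Icc u T ⊆ Icc 0 T := Icc_subset_Icc_left hu.1
    exact integral_smul_volterraAdjoint hu.2
      (hF₁.mono fun _ hp => ⟨hu.1.trans hp.1, hp.2⟩)
      (hΘ.comp (f := fun s => (s, u)) (by fun_prop) fun _ hs => ⟨hu.1, hs⟩)
      (hh.mono_set hsub) (hζh.mono_set hsub) fun r hr => hζ u r hu.1 hr.1 hr.2
  have hD := (hasDerivWithinAt_integral_left_Icc hζh ht ((hζcont t ht).smul hht)).congr
    hadjoint (hadjoint t ht)
  refine ⟨hD, ?_⟩
  rw [hD.derivWithin (uniqueDiffOn_Icc hT t ht), neg_smul_neg, one_div, inv_smul_smul₀ hζt]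

end VolterraAdjoint

/-- Theorem 3.2(2) of the paper: under condition (A3)
(`Θ(r,t)·F(r,r) + ∫_t^r Θ(s,t)·F₁(r,s) ds = ζ(r)` with `ζ` continuous and nowhere zero),
for every continuous `h` the function `t ↦ ∫_t^T Θ(s,t)·(K_F^* h)(s) ds` is differentiable on
`[0,T]` with derivative `−ζ(t)·h(t)`; consequently
`h(t) = −(1/ζ(t))·(d/dt)∫_t^T Θ(s,t)·(K_F^* h)(s) ds`, i.e. `(K_F^*)⁻¹(K_F^* h) = h`,
where `(K_F^* h)(s) = F(s,s)h(s) + ∫_s^T F₁(r,s)h(r) dr`. -/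
theorem KFstar_inverse_via_derivative
    (T : ℝ) (hT : 0 < T) (F F₁ Θ : ℝ → ℝ → ℝ) (ζ : ℝ → ℝ)
    (hFcont : ContinuousOn (fun p : ℝ × ℝ => F p.1 p.2) (Icc 0 T ×ˢ Icc 0 T))
    (hderiv : ∀ s r : ℝ, 0 ≤ s → s ≤ r → r ≤ T →
      HasDerivWithinAt (fun u => F u s) (F₁ r s) (Icc s T) r)
    (hF₁cont : ContinuousOn (fun p : ℝ × ℝ => F₁ p.1 p.2)
      {p : ℝ × ℝ | 0 ≤ p.2 ∧ p.2 ≤ p.1 ∧ p.1 ≤ T})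
    (hΘcont : ContinuousOn (fun p : ℝ × ℝ => Θ p.1 p.2)
      {p : ℝ × ℝ | 0 ≤ p.2 ∧ p.2 ≤ p.1 ∧ p.1 ≤ T})
    (hζcont : Continuous ζ) (hζne : ∀ t ∈ Icc (0:ℝ) T, ζ t ≠ 0)
    (hζ : ∀ t r : ℝ, 0 ≤ t → t ≤ r → r ≤ T →
      Θ r t * F r r + (∫ s in t..r, Θ s t * F₁ r s) = ζ r)
    (h : ℝ → ℝ) (hh : Continuous h) (t : ℝ) (ht : t ∈ Icc (0:ℝ) T) :
    HasDerivWithinAt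
        (fun u => ∫ s in u..T, Θ s u * (F s s * h s + ∫ r in s..T, F₁ r s * h r))
        (-(ζ t * h t)) (Icc 0 T) t ∧
      h t = -(1 / ζ t) *
        derivWithin
          (fun u => ∫ s in u..T, Θ s u * (F s s * h s + ∫ r in s..T, F₁ r s * h r))
          (Icc 0 T) t := by
  simpa only [volterraAdjoint, smul_eq_mul] using KFstar_inverse_via_derivative_general hT hderiv
    hF₁cont hΘcont hζcont.continuousOn hζ hh.integrableOn_Icc ht (hζne t ht) hh.continuousWithinAt
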